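/- For all integers r, l with 0 ≤ 2r ≤ n and l > 2r one has Λ π_{l,r} = (l−2r)·(2n−2r−l+1)·π_{l−1,r} in M (and Λ π_{2r,r} = 0). -/

import Mathlib

/-- Valid basis indices: pairs `(k,p)` of integers with `0 ≤ p` and `2p ≤ k`. -/
def Idx : Type := { x : ℤ × ℤ // 0 ≤ x.2 ∧ 2 * x.2 ≤ x.1 }

/-- The free real vector space on the basis `{e_{k,p} : 0 ≤ 2p ≤ k}`. -/
abbrev M : Type := Idx →₀ ℝ

/-- The basis vector `e_{k,p}`, with the convention that it is `0` for invalid indices. -/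
noncomputable def e (k p : ℤ) : M :=
  if h : 0 ≤ p ∧ 2 * p ≤ k then Finsupp.single ⟨(k, p), h⟩ 1 else 0

/-- `L e_{k,p} = (k - 2p + 1) e_{k+1,p}`. -/
noncomputable def opL : M →ₗ[ℝ] M :=
  Finsupp.lsum ℝ fun v => LinearMap.toSpanSingleton ℝ M
    (((v.1.1 - 2 * v.1.2 + 1 : ℤ) : ℝ) • e (v.1.1 + 1) v.1.2)

/-- `Λ e_{k,p} = (2n - 2p - k + 1) e_{k-1,p} + (k - 2p + 1) e_{k-1,p-1}`. -/
noncomputable def opLam (n : ℕ) : M →ₗ[ℝ] M :=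
  Finsupp.lsum ℝ fun v => LinearMap.toSpanSingleton ℝ M
    ((((2 * (n : ℤ) - 2 * v.1.2 - v.1.1 + 1 : ℤ) : ℝ)) • e (v.1.1 - 1) v.1.2 +
      (((v.1.1 - 2 * v.1.2 + 1 : ℤ) : ℝ)) • e (v.1.1 - 1) (v.1.2 - 1))

/-- `H e_{k,p} = (2k - 2n) e_{k,p}`. -/
noncomputable def opH (n : ℕ) : M →ₗ[ℝ] M :=
  Finsupp.lsum ℝ fun v => LinearMap.toSpanSingleton ℝ M
    (((2 * v.1.1 - 2 * (n : ℤ) : ℤ) : ℝ) • e v.1.1 v.1.2)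

/-- The primitive element
`π_{2r,r} = (-1)^r (2n-4r+1)!! ∑_{i=0}^r (-1)^i ((2r-2i-1)!!/(2n-2r-2i+1)!!) e_{2r,i}`.
(Note `(2r-2i-1)` is truncated natural subtraction, so for `i = r` the numerator is
`0‼ = 1`, matching the convention `(-1)!! = 1`.) -/
noncomputable def piBase (n r : ℕ) : M :=
  ((-1 : ℝ) ^ r * (Nat.doubleFactorial (2 * n - 4 * r + 1) : ℝ)) •
    ∑ i ∈ Finset.range (r + 1),
      ((-1 : ℝ) ^ i * (Nat.doubleFactorial (2 * r - 2 * i - 1) : ℝ) /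
          (Nat.doubleFactorial (2 * n - 2 * r - 2 * i + 1) : ℝ)) •
        e (2 * r : ℤ) (i : ℤ)

/-- `π_{k,r} := L^(k-2r) π_{2r,r}`. -/
noncomputable def piElt (n k r : ℕ) : M := (opL ^ (k - 2 * r)) (piBase n r)

theorem lsum_aux (f : Idx → M) (v : Idx) :
    Finsupp.lsum ℝ (fun v => LinearMap.toSpanSingleton ℝ M (f v)) (Finsupp.single v (1 : ℝ))
      = f v := by
  rw [Finsupp.lsum_single, LinearMap.toSpanSingleton_apply, one_smul]

theorem opL_e (k p : ℤ) : opL (e k p) = ((k - 2 * p + 1 : ℤ) : ℝ) • e (k + 1) p := by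
  by_cases h : 0 ≤ p ∧ 2 * p ≤ k
  · conv_lhs => rw [e, dif_pos h]
    exact lsum_aux _ _
  · conv_lhs => rw [e, dif_neg h, map_zero]
    by_cases h2 : k - 2 * p + 1 = 0
    · rw [h2]; simp
    · rw [e, dif_neg (by omega), smul_zero]

theorem opH_e (n : ℕ) (k p : ℤ) :
    opH n (e k p) = ((2 * k - 2 * (n : ℤ) : ℤ) : ℝ) • e k p := by
  by_cases h : 0 ≤ p ∧ 2 * p ≤ k
  · conv_lhs => rw [e, dif_pos h]
    exact lsum_aux _ _
  · rw [e, dif_neg h, map_zero, smul_zero]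

theorem opLam_e (n : ℕ) (k p : ℤ) (h : 0 ≤ p ∧ 2 * p ≤ k) :
    opLam n (e k p) = ((2 * (n : ℤ) - 2 * p - k + 1 : ℤ) : ℝ) • e (k - 1) p +
      ((k - 2 * p + 1 : ℤ) : ℝ) • e (k - 1) (p - 1) := by
  conv_lhs => rw [e, dif_pos h]
  exact lsum_aux _ _

theorem hom_ext_e {f g : M →ₗ[ℝ] M}
    (h : ∀ k p : ℤ, (0 ≤ p ∧ 2 * p ≤ k) → f (e k p) = g (e k p)) : f = g := by
  refine Finsupp.lhom_ext' fun v => LinearMap.ext_ring ?_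
  obtain ⟨⟨k, p⟩, hv⟩ := v
  have := h k p hv
  rw [e, dif_pos hv] at this
  exact this

theorem comm_Lam_L (n : ℕ) (x : M) : opLam n (opL x) = opL (opLam n x) - opH n x := by
  have : opLam n ∘ₗ opL = opL ∘ₗ opLam n - opH n := by
    apply hom_ext_e
    intro k p h
    simp only [LinearMap.comp_apply, LinearMap.sub_apply]
    rw [opL_e, map_smul, opLam_e n (k + 1) p (by omega), opLam_e n k p h, opH_e, map_add,
      map_smul, map_smul, opL_e, opL_e]
    simp only [add_sub_cancel_right, sub_add_cancel]
    push_cast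
    module
  exact LinearMap.congr_fun this x

theorem comm_H_L (n : ℕ) (x : M) : opH n (opL x) = opL (opH n x) + (2 : ℝ) • opL x := by
  have : opH n ∘ₗ opL = opL ∘ₗ opH n + (2 : ℝ) • opL := by
    apply hom_ext_e
    intro k p h
    simp only [LinearMap.comp_apply, LinearMap.add_apply, LinearMap.smul_apply]
    rw [opL_e, map_smul, opH_e, opH_e, map_smul, opL_e]
    push_cast
    module
  exact LinearMap.congr_fun this x

theorem opH_piBase (n r : ℕ) : opH n (piBase n r) = (4 * r - 2 * n : ℝ) • piBase n r := by
  rw [piBase, map_smul, map_sum, smul_comm (4 * r - 2 * n : ℝ), Finset.smul_sum (r := (4 * r - 2 * n : ℝ))]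
  refine congrArg _ ?_
  refine Finset.sum_congr rfl fun i _ => ?_
  rw [map_smul, opH_e]
  push_cast
  module

theorem opLam_partial (n r : ℕ) (hrn : 2 * r ≤ n) (m : ℕ) (hm : m ≤ r) :
    opLam n (∑ i ∈ Finset.range (m + 1),
      ((-1 : ℝ) ^ i * (Nat.doubleFactorial (2 * r - 2 * i - 1) : ℝ) /
          (Nat.doubleFactorial (2 * n - 2 * r - 2 * i + 1) : ℝ)) •
        e (2 * r : ℤ) (i : ℤ)) =
    (((-1 : ℝ) ^ m * (Nat.doubleFactorial (2 * r - 2 * m - 1) : ℝ) /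
          (Nat.doubleFactorial (2 * n - 2 * r - 2 * m + 1) : ℝ)) *
      (2 * n - 2 * m - 2 * r + 1)) • e (2 * r - 1 : ℤ) (m : ℤ) := by
  induction m with
  | zero =>
    rw [Finset.sum_range_one, map_smul, opLam_e _ _ _ (by omega)]
    have : e (2 * r - 1 : ℤ) (((0 : ℕ) : ℤ) - 1) = 0 := by
      rw [e, dif_neg (by omega)]
    rw [this]
    push_cast
    module
  | succ m ih =>
    rw [Finset.sum_range_succ, map_add, ih (by omega), map_smul, opLam_e _ _ _ (by omega)]
    have h1 : (((m + 1 : ℕ) : ℤ) - 1) = m := by push_cast; ring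
    rw [h1]
    obtain ⟨a, rfl⟩ : ∃ a, r = m + 1 + a := ⟨r - (m + 1), by omega⟩
    obtain ⟨b, rfl⟩ : ∃ b, n = 2 * (m + 1 + a) + b := ⟨n - 2 * (m + 1 + a), by omega⟩
    have e1 : 2 * (m + 1 + a) - 2 * m - 1 = 2 * a + 1 := by omega
    have e2 : 2 * (m + 1 + a) - 2 * (m + 1) - 1 = 2 * a - 1 := by omega
    have e3 : 2 * (2 * (m + 1 + a) + b) - 2 * (m + 1 + a) - 2 * m + 1
      = (2 * a + 2 * b + 1) + 2 := by omega
    have e4 : 2 * (2 * (m + 1 + a) + b) - 2 * (m + 1 + a) - 2 * (m + 1) + 1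
      = 2 * a + 2 * b + 1 := by omega
    have e5 : Nat.doubleFactorial (2 * a + 1) = (2 * a + 1) * Nat.doubleFactorial (2 * a - 1) := by
      cases a with
      | zero => rfl
      | succ a => exact Nat.doubleFactorial_add_two (2 * a + 1)
    rw [e1, e2, e3, e4, e5, Nat.doubleFactorial_add_two]
    have hD : (Nat.doubleFactorial (2 * a + 2 * b + 1) : ℝ) ≠ 0 := by
      exact_mod_cast (Nat.doubleFactorial_pos _).ne'
    have hE : ((2 * a + 2 * b + 1 + 2 : ℝ)) ≠ 0 := by positivity
    generalize Nat.doubleFactorial (2 * a + 2 * b + 1) = D at *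
    generalize Nat.doubleFactorial (2 * a - 1) = N at *
    match_scalars
    · push_cast
      field_simp
      try ring
    · push_cast
      field_simp
      try ring

theorem opLam_piBase (n r : ℕ) (hrn : 2 * r ≤ n) : opLam n (piBase n r) = 0 := by
  rw [piBase, map_smul, opLam_partial n r hrn r le_rfl, e, dif_neg (by omega)]
  simp

theorem opH_pow (n r m : ℕ) : opH n ((opL ^ m) (piBase n r)) =
    (4 * r + 2 * m - 2 * n : ℝ) • (opL ^ m) (piBase n r) := by
  induction m with
  | zero => simp [opH_piBase]
  | succ m ih =>
    rw [pow_succ', Module.End.mul_apply, comm_H_L, ih, map_smul]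
    push_cast
    module

theorem opLam_pow (n r : ℕ) (hrn : 2 * r ≤ n) (m : ℕ) :
    opLam n ((opL ^ (m + 1)) (piBase n r)) =
    ((m + 1) * (2 * n - 4 * r - m) : ℝ) • (opL ^ m) (piBase n r) := by
  induction m with
  | zero =>
    rw [pow_succ', Module.End.mul_apply, comm_Lam_L, opH_pow]
    simp only [pow_zero, Module.End.one_apply, opLam_piBase n r hrn, map_zero]
    push_cast
    module
  | succ m ih =>
    rw [pow_succ', Module.End.mul_apply, comm_Lam_L, ih, opH_pow, map_smul,
      ← Module.End.mul_apply, ← pow_succ']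
    push_cast
    module

theorem stmt14 (n r : ℕ) (hrn : 2 * r ≤ n) :
    (∀ l : ℕ, 2 * r < l →
      opLam n (piElt n l r) =
        ((((l : ℤ) - 2 * r) * (2 * (n : ℤ) - 2 * r - l + 1) : ℤ) : ℝ) • piElt n (l - 1) r) ∧
    opLam n (piElt n (2 * r) r) = 0 := by
  refine ⟨fun l hl => ?_, ?_⟩
  · obtain ⟨m, rfl⟩ : ∃ m, l = 2 * r + m + 1 := ⟨l - 2 * r - 1, by omega⟩
    have h1 : 2 * r + m + 1 - 2 * r = m + 1 := by omega
    have h2 : 2 * r + m + 1 - 1 - 2 * r = m := by omega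
    rw [piElt, piElt, h1, h2, opLam_pow n r hrn]
    push_cast
    congr 1
    ring
  · rw [piElt, Nat.sub_self, pow_zero]
    exact opLam_piBase n r hrn
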